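/- Let σₓ = !![0, 1; 1, 0] and σ_z = !![1, 0; 0, −1] be the Pauli matrices in Matrix (Fin 2) (Fin 2) ℂ, and for (a, b) ∈ ZMod 2 × ZMod 2 let P_{a,b} := σₓ^a * σ_z^b. Let Φ⁺ : Matrix (Fin 2 × Fin 2) (Fin 2 × Fin 2) ℂ be the projector onto the maximally entangled state |Ψ⁺⟩ = (|00⟩ + |11⟩)/√2, i.e. Φ⁺ has entries (Φ⁺)_{(i,j),(k,l)} = 1/2 if i = j and k = l, and 0 otherwise. Then (1/4) • ∑_{(a,b) ∈ ZMod 2 × ZMod 2} (1 ⊗ₖ P_{a,b}) * Φ⁺ * (1 ⊗ₖ P_{a,b})ᴴ = (1/4) • (1 : Matrix (Fin 2 × Fin 2) (Fin 2 × Fin 2) ℂ), where ⊗ₖ denotes the Kronecker product of matrices. -/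

import Mathlib

open Matrix Kronecker

/-- The Pauli `X` matrix. -/
noncomputable def pauliX : Matrix (Fin 2) (Fin 2) ℂ := !![0, 1; 1, 0]

/-- The Pauli `Z` matrix. -/
noncomputable def pauliZ : Matrix (Fin 2) (Fin 2) ℂ := !![1, 0; 0, -1]

/-- The one-time pad unitaries `P_{a,b} = σₓ^a σ_z^b` for a two-bit key. -/
noncomputable def padUnitary (a b : ZMod 2) : Matrix (Fin 2) (Fin 2) ℂ :=
  pauliX ^ a.val * pauliZ ^ b.val

/-- The projector onto the maximally entangled state
`|Ψ⁺⟩ = (|00⟩ + |11⟩)/√2` of two qubits. -/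
noncomputable def maxEntProj : Matrix (Fin 2 × Fin 2) (Fin 2 × Fin 2) ℂ :=
  fun p q => if p.1 = p.2 ∧ q.1 = q.2 then 1 / 2 else 0

/-- **Security of the elementary one-time pad with a maximally entangled
reference.**  Encoding the second qubit of `|Ψ⁺⟩⟨Ψ⁺|` with a uniformly random
pad unitary yields the two-qubit maximally mixed state `𝟙/4`. -/
theorem pad_on_maximally_entangled_state :
    (1 / 4 : ℂ) • ∑ p : ZMod 2 × ZMod 2,
        ((1 : Matrix (Fin 2) (Fin 2) ℂ) ⊗ₖ padUnitary p.1 p.2) * maxEntProj *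
          ((1 : Matrix (Fin 2) (Fin 2) ℂ) ⊗ₖ padUnitary p.1 p.2)ᴴ
      = (1 / 4 : ℂ) • (1 : Matrix (Fin 2 × Fin 2) (Fin 2 × Fin 2) ℂ) := by
  have h00 : padUnitary 0 0 = !![1, 0; 0, 1] := by
    simp [padUnitary, Matrix.one_fin_two]
  have h01 : padUnitary 0 1 = !![1, 0; 0, -1] := by
    simp [padUnitary, pauliZ, ZMod.val_one]
  have h10 : padUnitary 1 0 = !![0, 1; 1, 0] := by
    simp [padUnitary, pauliX, ZMod.val_one]
  have h11 : padUnitary 1 1 = !![0, -1; 1, 0] := by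
    simp [padUnitary, pauliX, pauliZ, ZMod.val_one]
  have hs : ∀ f : ZMod 2 → Matrix (Fin 2 × Fin 2) (Fin 2 × Fin 2) ℂ,
      ∑ a, f a = f 0 + f 1 := fun f => Fin.sum_univ_two f
  congr 1
  rw [Fintype.sum_prod_type]
  simp only [hs, h00, h01, h10, h11]
  ext ⟨i, j⟩ ⟨k, l⟩
  fin_cases i <;> fin_cases j <;> fin_cases k <;> fin_cases l <;>
    norm_num [Matrix.mul_apply, Fintype.sum_prod_type, Fin.sum_univ_two, maxEntProj,
      Matrix.one_apply, Matrix.kroneckerMap_apply, Matrix.conjTranspose_apply]
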